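/- Let V be a finite-dimensional real inner product space of dimension q, let S : V → V be a symmetric linear endomorphism (i.e. ⟨S x, y⟩ = ⟨x, S y⟩ for all x, y ∈ V), and let r be a natural number with 0 < r < q. If for every tuple of vectors v₁, …, v_r ∈ V one has ∑_{j=1}^{r} v₁ ∧ ⋯ ∧ v_{j-1} ∧ S(v_j) ∧ v_{j+1} ∧ ⋯ ∧ v_r = 0 in the r-th exterior power ⋀^r V, then S = 0. -/

import Mathlib

open scoped RealInnerProductSpace

/-- Decomposable wedges of distinct basis vectors do not vanish. -/
lemma wedge_ne_zero_aux {V : Type*} [AddCommGroup V] [Module ℝ V] {q r : ℕ}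
    (b : Module.Basis (Fin q) ℝ V) (e : Fin r → Fin q) (he : Function.Injective e) :
    ExteriorAlgebra.ιMulti ℝ r (fun i => b (e i)) ≠ 0 := by
  intro h0
  have h1 : exteriorPower.ιMulti ℝ r (fun i => b (e i)) = 0 := by
    apply Subtype.ext
    simpa using h0
  have h2 := exteriorPower.pairingDual_ιMulti_ιMulti (fun i => b.coord (e i))
    (fun i => b (e i))
  rw [h1, map_zero] at h2
  have h3 : (Matrix.of fun i j => b.coord (e j) (b (e i))) = (1 : Matrix (Fin r) (Fin r) ℝ) := by
    ext i j
    simp [Matrix.one_apply, Finsupp.single_apply, he.eq_iff]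
  rw [h3, Matrix.det_one] at h2
  exact zero_ne_one h2

lemma sum_eq_zero_aux {V : Type*} [AddCommGroup V] [Module ℝ V] {q : ℕ}
    (b : Module.Basis (Fin q) ℝ V) (S : V →ₗ[ℝ] V) (l : Fin q → ℝ)
    (hb : ∀ i, S (b i) = l i • b i) (r : ℕ)
    (h : ∀ v : Fin r → V,
      ∑ j : Fin r, ExteriorAlgebra.ιMulti ℝ r (Function.update v j (S (v j))) = 0)
    (s : Finset (Fin q)) (hs : s.card = r) : ∑ i ∈ s, l i = 0 := by
  have h1 := h (fun i => b (s.orderEmbOfFin hs i))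
  have h2 : ∀ j : Fin r, ExteriorAlgebra.ιMulti ℝ r
      (Function.update (fun i => b (s.orderEmbOfFin hs i)) j (S (b (s.orderEmbOfFin hs j))))
      = l (s.orderEmbOfFin hs j) •
        ExteriorAlgebra.ιMulti ℝ r (fun i => b (s.orderEmbOfFin hs i)) := by
    intro j
    rw [hb, AlternatingMap.map_update_smul]
    congr 2
    exact Function.update_eq_self j _
  simp only [h2] at h1
  rw [← Finset.sum_smul] at h1
  have h3 := (smul_eq_zero.mp h1).resolve_right
    (wedge_ne_zero_aux b _ (s.orderEmbOfFin hs).injective)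
  rw [← h3]
  conv_lhs => rw [← Finset.map_orderEmbOfFin_univ s hs, Finset.sum_map]
  rfl

lemma all_eq_zero_aux (q r : ℕ) (hr0 : 0 < r) (hrq : r < q) (l : Fin q → ℝ)
    (h : ∀ s : Finset (Fin q), s.card = r → ∑ i ∈ s, l i = 0) (i : Fin q) : l i = 0 := by
  have heq : ∀ j, l j = l i := by
    intro j
    by_cases hij : j = i
    · rw [hij]
    have hc : r - 1 ≤ (Finset.univ \ {i, j} : Finset (Fin q)).card := by
      have h1 := Finset.le_card_sdiff ({i, j} : Finset (Fin q)) Finset.univ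
      have h2 := Finset.card_le_two (a := i) (b := j)
      simp only [Finset.card_univ, Fintype.card_fin] at h1
      omega
    obtain ⟨t, ht, htc⟩ := Finset.exists_subset_card_eq hc
    have hi : i ∉ t := fun hm => by simpa using ht hm
    have hj : j ∉ t := fun hm => by simpa using ht hm
    have h1 := h (insert i t) (by rw [Finset.card_insert_of_notMem hi]; omega)
    have h2 := h (insert j t) (by rw [Finset.card_insert_of_notMem hj]; omega)
    rw [Finset.sum_insert hi] at h1
    rw [Finset.sum_insert hj] at h2
    linarith
  obtain ⟨s, -, hs⟩ := Finset.exists_subset_card_eq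
    (s := (Finset.univ : Finset (Fin q))) (n := r) (by simpa using hrq.le)
  have h1 := h s hs
  simp only [heq, Finset.sum_const, hs, nsmul_eq_mul] at h1
  exact (mul_eq_zero.mp h1).resolve_left (Nat.cast_ne_zero.mpr (Nat.pos_iff_ne_zero.mp hr0))

/-- If the canonical derivation extension of a symmetric endomorphism `S` of a real inner
product space `V` to the `r`-th exterior power (for some `0 < r < dim V = q`) vanishes
identically, then `S = 0`.  The decomposable wedge `v₁ ∧ ⋯ ∧ v_r` is expressed via the
alternating map `ExteriorAlgebra.ιMulti ℝ r`, whose values lie in (and span) the `r`-th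
exterior power `⋀[ℝ]^r V` inside the exterior algebra. -/
theorem symmetric_endomorphism_eq_zero_of_derivation_extension_eq_zero
    {V : Type*} [NormedAddCommGroup V] [InnerProductSpace ℝ V] [FiniteDimensional ℝ V]
    (q : ℕ) (hq : Module.finrank ℝ V = q)
    (S : V →ₗ[ℝ] V) (hS : ∀ x y : V, ⟪S x, y⟫ = ⟪x, S y⟫)
    (r : ℕ) (hr0 : 0 < r) (hrq : r < q)
    (h : ∀ v : Fin r → V,
      ∑ j : Fin r, ExteriorAlgebra.ιMulti ℝ r (Function.update v j (S (v j))) = 0) :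
    S = 0 := by
  have hT : S.IsSymmetric := hS
  have key := sum_eq_zero_aux (hT.eigenvectorBasis hq).toBasis S (hT.eigenvalues hq)
    (fun i => by simpa using hT.apply_eigenvectorBasis hq i) r h
  have hl := all_eq_zero_aux q r hr0 hrq _ key
  apply (hT.eigenvectorBasis hq).toBasis.ext
  intro i
  have h1 := hT.apply_eigenvectorBasis hq i
  simp only [OrthonormalBasis.coe_toBasis, LinearMap.zero_apply]
  rw [h1, hl i]
  simp
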